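/- Let d, m be positive integers, β₁⁰, β₂⁰ ∈ ℝ^d, and let M₁, M₂ be m×d real matrices and W an m×m real matrix. Let λ₁₁, λ₂₂, λ₁⁰, λ₂⁰ be real numbers with λ₁₁ + λ₂⁰ − λ₂₂ ≠ 0 and λ₂₂ + λ₁⁰ − λ₁₁ ≠ 0. Define β₁(γ) ≔ (λ₁₁ β₁⁰ + (λ₂⁰ − λ₂₂) β₂⁰)/(λ₁₁ + λ₂⁰ − λ₂₂) and β₂(γ) ≔ (λ₂₂ β₂⁰ + (λ₁⁰ − λ₁₁) β₁⁰)/(λ₂₂ + λ₁⁰ − λ₁₁), and define the limit moment vector m(γ) ≔ λ₁₁ M₁ (β₁⁰ − β₁(γ)) + (λ₂⁰ − λ₂₂) M₂ (β₂⁰ − β₁(γ)) + (λ₁⁰ − λ₁₁) M₁ (β₁⁰ − β₂(γ)) + λ₂₂ M₂ (β₂⁰ − β₂(γ)). Then m(γ)ᵀ W m(γ) = (λ₁₁(λ₂⁰ − λ₂₂)/(λ₁₁ + λ₂⁰ − λ₂₂) + λ₂₂(λ₁⁰ − λ₁₁)/(λ₂₂ + λ₁⁰ − λ₁₁))² ·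 (β₂⁰ − β₁⁰)ᵀ (M₂ − M₁)ᵀ W (M₂ − M₁)(β₂⁰ − β₁⁰). In particular, if (M₂ − M₁)(β₂⁰ − β₁⁰) = 0, then m(γ) = 0 and m(γ)ᵀ W m(γ) = 0. -/

import Mathlib

open Matrix

/-!
Each `β_g(γ)` is the weighted mean of `β₁⁰` and `β₂⁰` with the weights that the two true groups have
inside the assigned group `g`. The residuals of two points `x`, `y` from their mean with weights
`a`, `b` are `-b/(a+b)` and `a/(a+b)` times `y - x`, so after weighting both true groups enter the
moment of an assigned group with the same coefficient `ab/(a+b)` and opposite signs. Every assigned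
group thus contributes a multiple of `(M₂ - M₁)(β₂⁰ - β₁⁰)`, and a quadratic form turns the sum of
the coefficients into its square.
-/

section WeightedMean

variable {K E : Type*} [DivisionRing K] [AddCommGroup E] [Module K E]

/-- The mean of `x` and `y` with weights `a` and `b`, which need not be nonnegative. The pseudo-true
values of the pooled estimator have this form. If `a + b = 0` it takes the junk value `0`. -/
def weightedMean (a b : K) (x y : E) : E :=
  (a + b)⁻¹ • (a • x + b • y)

theorem weightedMean_comm (a b : K) (x y : E) : weightedMean a b x y = weightedMean b a y x := by
  rw [weightedMean, weightedMean, add_comm a b, add_comm (a • x)]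

theorem left_sub_weightedMean {a b : K} (hab : a + b ≠ 0) (x y : E) :
    x - weightedMean a b x y = ((a + b)⁻¹ * b) • (x - y) := by
  calc x - weightedMean a b x y
      = (a + b)⁻¹ • ((a + b) • x - (a • x + b • y)) := by
        rw [weightedMean, smul_sub, inv_smul_smul₀ hab]
    _ = ((a + b)⁻¹ * b) • (x - y) := by
        rw [add_smul, add_sub_add_left_eq_sub, ← smul_sub, smul_smul]

theorem right_sub_weightedMean {a b : K} (hab : a + b ≠ 0) (x y : E) :
    y - weightedMean a b x y = ((a + b)⁻¹ * a) • (y - x) := by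
  rw [weightedMean_comm, left_sub_weightedMean (add_comm a b ▸ hab), add_comm b a]

end WeightedMean

/-- The contribution of one assigned group to the limit moment at the parameter `z`: the true groups
have weights `a` and `b`, cross-moment limits `f` and `g`, and parameters `x` and `y`. -/
def groupMoment {K E F : Type*} [Semiring K] [AddCommGroup E] [AddCommMonoid F] [Module K E]
    [Module K F] (f g : E →ₗ[K] F) (a b : K) (x y z : E) : F :=
  a • f (x - z) + b • g (y - z)

section LimitMoment

variable {K E F : Type*} [Field K] [AddCommGroup E] [AddCommGroup F] [Module K E] [Module K F]

theorem groupMoment_weightedMean (f g : E →ₗ[K] F) {a b : K} (hab : a + b ≠ 0) (x y : E) :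
    groupMoment f g a b x y (weightedMean a b x y) = (a * b / (a + b)) • (g - f) (y - x) := by
  have left_term : a • f (x - weightedMean a b x y) = -((a * b / (a + b)) • f (y - x)) := by
    rw [left_sub_weightedMean hab, ← neg_sub y x, map_smul, map_neg, smul_neg, smul_neg, smul_smul]
    congr 2
    ring
  have right_term : b • g (y - weightedMean a b x y) = (a * b / (a + b)) • g (y - x) := by
    rw [right_sub_weightedMean hab, map_smul, smul_smul]
    congr 1
    ring
  rw [groupMoment, left_term, right_term, LinearMap.sub_apply, smul_sub, neg_add_eq_sub]

theorem statement4_general (β10 β20 : E) (f₁ f₂ : E →ₗ[K] F) (Q : QuadraticForm K F)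
    (l11 l22 l10 l20 : K) (h1 : l11 + l20 - l22 ≠ 0) (h2 : l22 + l10 - l11 ≠ 0) :
    let β1γ : E := (l11 + l20 - l22)⁻¹ • (l11 • β10 + (l20 - l22) • β20)
    let β2γ : E := (l22 + l10 - l11)⁻¹ • (l22 • β20 + (l10 - l11) • β10)
    let mγ : F := l11 • f₁ (β10 - β1γ) + (l20 - l22) • f₂ (β20 - β1γ)
      + (l10 - l11) • f₁ (β10 - β2γ) + l22 • f₂ (β20 - β2γ)
    Q mγ = (l11 * (l20 - l22) / (l11 + l20 - l22) + l22 * (l10 - l11) / (l22 + l10 - l11)) ^ 2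
        * Q ((f₂ - f₁) (β20 - β10))
      ∧ ((f₂ - f₁) (β20 - β10) = 0 → mγ = 0 ∧ Q mγ = 0) := by
  intro β1γ β2γ mγ
  rw [add_sub_assoc] at h1 h2
  have hβ1γ : β1γ = weightedMean l11 (l20 - l22) β10 β20 := by
    rw [weightedMean, ← add_sub_assoc]
  have hβ2γ : β2γ = weightedMean (l10 - l11) l22 β10 β20 := by
    rw [weightedMean_comm, weightedMean, ← add_sub_assoc]
  have hmγ : mγ = (l11 * (l20 - l22) / (l11 + l20 - l22) + l22 * (l10 - l11) / (l22 + l10 - l11))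
      • (f₂ - f₁) (β20 - β10) := by
    calc mγ = groupMoment f₁ f₂ l11 (l20 - l22) β10 β20 β1γ
          + groupMoment f₁ f₂ (l10 - l11) l22 β10 β20 β2γ := add_assoc _ _ _
      _ = (l11 * (l20 - l22) / (l11 + (l20 - l22)) + (l10 - l11) * l22 / (l10 - l11 + l22))
          • (f₂ - f₁) (β20 - β10) := by
        rw [hβ1γ, hβ2γ, groupMoment_weightedMean f₁ f₂ h1,
          groupMoment_weightedMean f₁ f₂ (add_comm l22 _ ▸ h2), ← add_smul]
      _ = _ := by
        congr 1
        ring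
  refine ⟨by rw [hmγ, QuadraticMap.map_smul, smul_eq_mul, sq], fun h ↦ ?_⟩
  have mγ_eq_zero : mγ = 0 := by rw [hmγ, h, smul_zero]
  exact ⟨mγ_eq_zero, by rw [mγ_eq_zero, QuadraticMap.map_zero]⟩

end LimitMoment

theorem toQuadraticForm'_apply {R n : Type*} [CommRing R] [Fintype n] [DecidableEq n]
    (W : Matrix n n R) (v : n → R) : W.toQuadraticForm' v = v ⬝ᵥ W *ᵥ v :=
  toLinearMap₂'_apply' W v v

/-- **Algebraic core of Theorem 2.** With `M₁₁ = M₁₂ = M₁` and `M₂₁ = M₂₂ = M₂`, the limit of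
the pooled GMM objective evaluated at the pseudo-true values equals the displayed quadratic
form; in particular it vanishes (together with the limit moment itself) whenever
`(M₂ − M₁)(β₂⁰ − β₁⁰) = 0`. -/
theorem statement4 (d m : ℕ) (hd : 0 < d) (hm : 0 < m)
    (β10 β20 : Fin d → ℝ)
    (M1 M2 : Matrix (Fin m) (Fin d) ℝ) (W : Matrix (Fin m) (Fin m) ℝ)
    (l11 l22 l10 l20 : ℝ)
    (h1 : l11 + l20 - l22 ≠ 0) (h2 : l22 + l10 - l11 ≠ 0) :
    let β1γ : Fin d → ℝ := (l11 + l20 - l22)⁻¹ • (l11 • β10 + (l20 - l22) • β20)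
    let β2γ : Fin d → ℝ := (l22 + l10 - l11)⁻¹ • (l22 • β20 + (l10 - l11) • β10)
    let mγ : Fin m → ℝ :=
      l11 • M1.mulVec (β10 - β1γ) + (l20 - l22) • M2.mulVec (β20 - β1γ)
        + (l10 - l11) • M1.mulVec (β10 - β2γ) + l22 • M2.mulVec (β20 - β2γ)
    (mγ ⬝ᵥ W.mulVec mγ
        = (l11 * (l20 - l22) / (l11 + l20 - l22) + l22 * (l10 - l11) / (l22 + l10 - l11)) ^ 2
          * (((M2 - M1).mulVec (β20 - β10)) ⬝ᵥ W.mulVec ((M2 - M1).mulVec (β20 - β10))))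
    ∧ ((M2 - M1).mulVec (β20 - β10) = 0 → mγ = 0 ∧ mγ ⬝ᵥ W.mulVec mγ = 0) := by
  simpa only [sub_mulVec, mulVecLin_apply, LinearMap.sub_apply, toQuadraticForm'_apply] using
    statement4_general β10 β20 M1.mulVecLin M2.mulVecLin W.toQuadraticForm' l11 l22 l10 l20 h1 h2
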